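/- (Theorem: Bethe/GAMP correspondence.) Let ρ ∈ [0,1], M, N ∈ ℕ, F ∈ ℝ^{M×N}, and for each μ let p_μ : ℝ → ℝ be measurable and nonnegative. Let (R,Σ,ω,a,c) be such that Σ_i > 0, c_i ≥ 0, V_μ := ∑_i F_{μi}² c_i > 0, and suppose for each μ there exists V'_μ > V_μ with ∫ (1 + z²)·p_μ(z)·exp(−(z−ω_μ)²/(2V'_μ)) dz < ∞ and Z_out^μ(ω_μ,V_μ) > 0 (so that differentiation under the integral sign is valid). Then all partial derivatives of the GAMP Bethe free energy F_GAMP with respect to each R_i, each Σ_i, each ω_μ, each a_i and each c_i vanish at (R,Σ,ω,a,c) if and only if the GAMP fixed-point equations hold: for every i and μ, (i) a_i = f_a(R_i,Σ_i), (ii) c_i = f_c(R_i,Σ_i), (iii) ω_μ = ∑_i F_{μi} a_i − V_μ·g_out^μ(ω_μ,V_μ), (iv) R_i = a_i + Σ_i²·∑_μ F_{μi}·g_out^μ(ω_μ,V_μ), and (v) 1/Σ_i² = ∑_μ F_{μi}²·(−∂_ω g_out^μ(ω_μ,V_μ)). -/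

import Mathlib

open MeasureTheory ProbabilityTheory

/-- The prior `P₀ = ρ·N(0,1) + (1-ρ)·δ₀`. -/
noncomputable def P0 (ρ : ℝ) : Measure ℝ :=
  ENNReal.ofReal ρ • gaussianReal 0 1 + ENNReal.ofReal (1 - ρ) • Measure.dirac 0

/-- Partition function `Z(R,Σ) = ∫ exp(-(x-R)²/(2Σ²)) dP₀(x)`. -/
noncomputable def Zpart (ρ R σ : ℝ) : ℝ :=
  ∫ x, Real.exp (-(x - R) ^ 2 / (2 * σ ^ 2)) ∂(P0 ρ)

/-- Posterior mean `f_a(R,Σ)`. -/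
noncomputable def fa (ρ R σ : ℝ) : ℝ :=
  (Zpart ρ R σ)⁻¹ * ∫ x, x * Real.exp (-(x - R) ^ 2 / (2 * σ ^ 2)) ∂(P0 ρ)

/-- Posterior variance `f_c(R,Σ)`. -/
noncomputable def fc (ρ R σ : ℝ) : ℝ :=
  (Zpart ρ R σ)⁻¹ * (∫ x, x ^ 2 * Real.exp (-(x - R) ^ 2 / (2 * σ ^ 2)) ∂(P0 ρ))
    - fa ρ R σ ^ 2

/-- Output-channel partition function `Z_out(ω,V) = ∫ p(z)·exp(−(z−ω)²/(2V)) dz`. -/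
noncomputable def Zout (p : ℝ → ℝ) (ω V : ℝ) : ℝ :=
  ∫ z, p z * Real.exp (-(z - ω) ^ 2 / (2 * V))

/-- The output function
`g_out(ω,V) = [∫ p(z)·(z−ω)·exp(−(z−ω)²/(2V)) dz]/(V·Z_out(ω,V))`. -/
noncomputable def gout (p : ℝ → ℝ) (ω V : ℝ) : ℝ :=
  (∫ z, p z * (z - ω) * Real.exp (-(z - ω) ^ 2 / (2 * V))) / (V * Zout p ω V)

/-- The normalized per-measurement partition function `Z^μ(ω,V) = (2πV)^{−1/2}·Z_out(ω,V)`. -/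
noncomputable def Zmu (p : ℝ → ℝ) (ω V : ℝ) : ℝ :=
  (Real.sqrt (2 * Real.pi * V))⁻¹ * Zout p ω V

/-- The GAMP Bethe free energy `F_GAMP(R,Σ,ω,a,c)`, with `V_μ = ∑_i F_{μi}² c_i`. -/
noncomputable def FGAMP (ρ : ℝ) {M N : ℕ} (F : Fin M → Fin N → ℝ)
    (p : Fin M → ℝ → ℝ) (R Sv : Fin N → ℝ) (ω : Fin M → ℝ) (a c : Fin N → ℝ) : ℝ :=
  -∑ μ, Real.log (Zmu (p μ) (ω μ) (∑ i, F μ i ^ 2 * c i))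
    - ∑ i, (c i + (a i - R i) ^ 2) / (2 * Sv i ^ 2)
    - ∑ μ, (ω μ - ∑ i, F μ i * a i) ^ 2 / (2 * ∑ i, F μ i ^ 2 * c i)
    - ∑ i, Real.log (Zpart ρ (R i) (Sv i))

open Filter Topology

section GaussianMoments

/-- The `k`-th centred moment of `q` under the Gaussian weight `exp (-(x - t)² / (2 v))`. -/
noncomputable def gaussMoment (ν : Measure ℝ) (q : ℝ → ℝ) (k : ℕ) (t v : ℝ) : ℝ :=
  ∫ x, q x * ((x - t) ^ k * Real.exp (-(x - t) ^ 2 / (2 * v))) ∂ν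

variable {ν : Measure ℝ} {q : ℝ → ℝ} {r V V' : ℝ}

theorem hasDerivAt_integral_mul_of_le {w : ℝ → ℝ} {G G' : ℝ → ℝ → ℝ} {t₀ K : ℝ}
    (hq : Measurable q) (hw : Integrable (fun x => q x * w x) ν)
    (hG : ∀ t, Measurable (G t)) (hG' : Measurable (G' t₀))
    (hb : ∀ᶠ t in 𝓝 t₀, ∀ x, |G t x| ≤ K * w x ∧ |G' t x| ≤ K * w x ∧
      HasDerivAt (fun s => G s x) (G' t x) t) :
    HasDerivAt (fun t => ∫ x, q x * G t x ∂ν) (∫ x, q x * G' t₀ x ∂ν) t₀ := by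
  have hle : ∀ x y, |y| ≤ K * w x → ‖q x * y‖ ≤ |K| * ‖q x * w x‖ := by
    intro x y hy
    have h1 : |y| ≤ |K| * |w x| := hy.trans ((le_abs_self _).trans (abs_mul _ _).le)
    rw [Real.norm_eq_abs, Real.norm_eq_abs, abs_mul, abs_mul]
    calc |q x| * |y| ≤ |q x| * (|K| * |w x|) := by gcongr
      _ = _ := by ring
  refine (hasDerivAt_integral_of_dominated_loc_of_deriv_le (μ := ν)
    (F := fun t x => q x * G t x) (F' := fun t x => q x * G' t x)
    (bound := fun x => |K| * ‖q x * w x‖) (s := {t | ∀ x, |G t x| ≤ K * w x ∧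
      |G' t x| ≤ K * w x ∧ HasDerivAt (fun s => G s x) (G' t x) t}) hb ?_ ?_ ?_ ?_ ?_ ?_).2
  · exact Eventually.of_forall fun t => (hq.mul (hG t)).aestronglyMeasurable
  · exact (hw.norm.const_mul |K|).mono' (hq.mul (hG t₀)).aestronglyMeasurable
      (Eventually.of_forall fun x => hle x _ (hb.self_of_nhds x).1)
  · exact (hq.mul hG').aestronglyMeasurable
  · exact Eventually.of_forall fun x t ht => hle x _ (ht x).2.1
  · exact hw.norm.const_mul |K|
  · exact Eventually.of_forall fun x t ht => (ht x).2.2.const_mul (q x)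

theorem exp_neg_sq_le_of_abs_sub_le_one {t : ℝ} (hV : 0 < V) (hV' : V < V') (ht : |t - r| ≤ 1)
    (x : ℝ) :
    Real.exp (-(x - t) ^ 2 / (2 * V)) ≤
      Real.exp (1 / (2 * (V' - V))) * Real.exp (-(x - r) ^ 2 / (2 * V')) := by
  rw [← Real.exp_add, Real.exp_le_exp]
  have hd : 0 < V' - V := sub_pos.2 hV'
  have hV'0 : 0 < V' := hV.trans hV'
  have hs : (t - r) ^ 2 ≤ 1 := (sq_le_one_iff_abs_le_one _).2 ht
  have key : (x - r) ^ 2 / (2 * V') ≤ (x - t) ^ 2 / (2 * V) + (t - r) ^ 2 / (2 * (V' - V)) := by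
    have : (x - t) ^ 2 / (2 * V) + (t - r) ^ 2 / (2 * (V' - V)) - (x - r) ^ 2 / (2 * V')
        = ((V' - V) * (x - t) - V * (t - r)) ^ 2 / (2 * V * (V' - V) * V') := by
      field_simp
      ring
    have h2 : 0 ≤ ((V' - V) * (x - t) - V * (t - r)) ^ 2 / (2 * V * (V' - V) * V') := by
      positivity
    linarith
  have h3 : (t - r) ^ 2 / (2 * (V' - V)) ≤ 1 / (2 * (V' - V)) := by gcongr
  rw [neg_div, neg_div]
  linarith

theorem sub_sq_le_of_abs_sub_le_one {t : ℝ} (ht : |t - r| ≤ 1) (x : ℝ) :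
    (x - t) ^ 2 ≤ (4 * r ^ 2 + 6) * (1 + x ^ 2) := by
  have hs : (t - r) ^ 2 ≤ 1 := (sq_le_one_iff_abs_le_one _).2 ht
  nlinarith [sq_nonneg (x + t), sq_nonneg (t - 2 * r), mul_nonneg (sq_nonneg r) (sq_nonneg x)]

theorem abs_pow_sub_le_of_abs_sub_le_one {t : ℝ} (ht : |t - r| ≤ 1) (x : ℝ) {k : ℕ}
    (hk : k ≤ 2) : |(x - t) ^ k| ≤ (4 * r ^ 2 + 7) * (1 + x ^ 2) := by
  have h := sub_sq_le_of_abs_sub_le_one ht x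
  have h0 : |(x - t) ^ k| ≤ 1 + (x - t) ^ 2 := by
    interval_cases k
    · simpa using sq_nonneg (x - t)
    · rw [pow_one, abs_le]
      constructor <;> nlinarith [sq_nonneg (x - t - 1), sq_nonneg (x - t + 1)]
    · rw [abs_of_nonneg (sq_nonneg _)]
      linarith
  nlinarith [sq_nonneg x]

theorem abs_pow_mul_exp_le {t : ℝ} (hV : 0 < V) (hV' : V < V') (ht : |t - r| ≤ 1)
    (x : ℝ) {k : ℕ} (hk : k ≤ 2) :
    |(x - t) ^ k * Real.exp (-(x - t) ^ 2 / (2 * V))| ≤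
      ((4 * r ^ 2 + 7) * Real.exp (1 / (2 * (V' - V)))) *
        ((1 + x ^ 2) * Real.exp (-(x - r) ^ 2 / (2 * V'))) := by
  rw [abs_mul, abs_of_pos (Real.exp_pos _)]
  calc _ ≤ ((4 * r ^ 2 + 7) * (1 + x ^ 2)) *
        (Real.exp (1 / (2 * (V' - V))) * Real.exp (-(x - r) ^ 2 / (2 * V'))) :=
      mul_le_mul (abs_pow_sub_le_of_abs_sub_le_one ht x hk)
        (exp_neg_sq_le_of_abs_sub_le_one hV hV' ht x) (Real.exp_pos _).le (by positivity)
    _ = _ := by ring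

theorem integrable_gaussMoment (hq : Measurable q) (hV : 0 < V) (hV' : V < V')
    (hint : Integrable (fun x => q x * ((1 + x ^ 2) * Real.exp (-(x - r) ^ 2 / (2 * V')))) ν)
    {k : ℕ} (hk : k ≤ 2) :
    Integrable (fun x => q x * ((x - r) ^ k * Real.exp (-(x - r) ^ 2 / (2 * V)))) ν := by
  refine (hint.norm.const_mul ((4 * r ^ 2 + 7) * Real.exp (1 / (2 * (V' - V))))).mono'
    (by fun_prop) (Eventually.of_forall fun x => ?_)
  have h := abs_pow_mul_exp_le (r := r) (t := r) hV hV' (by simp) x hk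
  rw [Real.norm_eq_abs, Real.norm_eq_abs, abs_mul, abs_mul (q x) ((1 + x ^ 2) * _),
    abs_of_nonneg (by positivity : 0 ≤ (1 + x ^ 2) * Real.exp (-(x - r) ^ 2 / (2 * V')))]
  calc _ ≤ |q x| * _ := mul_le_mul_of_nonneg_left h (abs_nonneg _)
    _ = _ := by ring

theorem hasDerivAt_exp_neg_sq (hV : V ≠ 0) (x t : ℝ) :
    HasDerivAt (fun s => Real.exp (-(x - s) ^ 2 / (2 * V)))
      ((x - t) / V * Real.exp (-(x - t) ^ 2 / (2 * V))) t := by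
  have h := ((((hasDerivAt_id t).const_sub x).pow 2).neg.div_const (2 * V)).exp
  refine h.congr_deriv ?_
  simp
  field_simp

theorem eventually_abs_sub_le_one (r : ℝ) : ∀ᶠ t in 𝓝 r, |t - r| ≤ 1 := by
  filter_upwards [Metric.closedBall_mem_nhds r one_pos] with t ht
  simpa [Real.dist_eq] using ht

theorem hasDerivAt_gaussMoment_zero (hq : Measurable q) (hV : 0 < V) (hV' : V < V')
    (hint : Integrable (fun x => q x * ((1 + x ^ 2) * Real.exp (-(x - r) ^ 2 / (2 * V')))) ν) :
    HasDerivAt (fun t => gaussMoment ν q 0 t V) (gaussMoment ν q 1 r V / V) r := by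
  set C := (4 * r ^ 2 + 7) * Real.exp (1 / (2 * (V' - V)))
  have hC : 0 ≤ C := by positivity
  have h := hasDerivAt_integral_mul_of_le (ν := ν) (t₀ := r) (K := C * (1 + 1 / V))
    (G := fun t x => (x - t) ^ 0 * Real.exp (-(x - t) ^ 2 / (2 * V)))
    (G' := fun t x => ((x - t) ^ 1 * Real.exp (-(x - t) ^ 2 / (2 * V))) / V)
    hq hint (fun t => by fun_prop) (by fun_prop) (by
      filter_upwards [eventually_abs_sub_le_one r] with t ht x
      set W := (1 + x ^ 2) * Real.exp (-(x - r) ^ 2 / (2 * V'))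
      have hW : 0 ≤ W := by positivity
      have h0 := abs_pow_mul_exp_le hV hV' ht x (k := 0) (by norm_num)
      have h1 := abs_pow_mul_exp_le hV hV' ht x (k := 1) (by norm_num)
      have e : C * (1 + 1 / V) * W = C * W + C * W / V := by ring
      have p0 : 0 ≤ C * W / V := by positivity
      refine ⟨by rw [e]; linarith, ?_, ?_⟩
      · rw [abs_div, abs_of_pos hV, e]
        have : |(x - t) ^ 1 * Real.exp (-(x - t) ^ 2 / (2 * V))| / V ≤ C * W / V := by gcongr
        have p1 : 0 ≤ C * W := by positivity
        linarith
      · refine ((hasDerivAt_exp_neg_sq hV.ne' x t).congr_deriv ?_).congr_of_eventuallyEq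
          (Eventually.of_forall fun s => by simp)
        ring)
  refine h.congr_deriv ?_
  rw [gaussMoment, ← integral_div]
  simp only [mul_div_assoc]

theorem hasDerivAt_gaussMoment_one (hq : Measurable q) (hV : 0 < V) (hV' : V < V')
    (hint : Integrable (fun x => q x * ((1 + x ^ 2) * Real.exp (-(x - r) ^ 2 / (2 * V')))) ν) :
    HasDerivAt (fun t => gaussMoment ν q 1 t V)
      (gaussMoment ν q 2 r V / V - gaussMoment ν q 0 r V) r := by
  set C := (4 * r ^ 2 + 7) * Real.exp (1 / (2 * (V' - V)))
  have hC : 0 ≤ C := by positivity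
  have h := hasDerivAt_integral_mul_of_le (ν := ν) (t₀ := r) (K := C * (1 + 1 / V))
    (G := fun t x => (x - t) ^ 1 * Real.exp (-(x - t) ^ 2 / (2 * V)))
    (G' := fun t x => ((x - t) ^ 2 * Real.exp (-(x - t) ^ 2 / (2 * V))) / V -
      (x - t) ^ 0 * Real.exp (-(x - t) ^ 2 / (2 * V)))
    hq hint (fun t => by fun_prop) (by fun_prop) (by
      filter_upwards [eventually_abs_sub_le_one r] with t ht x
      set W := (1 + x ^ 2) * Real.exp (-(x - r) ^ 2 / (2 * V'))
      have hW : 0 ≤ W := by positivity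
      have h0 := abs_pow_mul_exp_le hV hV' ht x (k := 0) (by norm_num)
      have h1 := abs_pow_mul_exp_le hV hV' ht x (k := 1) (by norm_num)
      have h2 := abs_pow_mul_exp_le hV hV' ht x (k := 2) (by norm_num)
      have e : C * (1 + 1 / V) * W = C * W + C * W / V := by ring
      have p0 : 0 ≤ C * W / V := by positivity
      refine ⟨by rw [e]; linarith, ?_, ?_⟩
      · refine (abs_sub _ _).trans ?_
        rw [abs_div, abs_of_pos hV, e]
        have : |(x - t) ^ 2 * Real.exp (-(x - t) ^ 2 / (2 * V))| / V ≤ C * W / V := by gcongr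
        linarith
      · have hd := ((hasDerivAt_id t).const_sub x).mul (hasDerivAt_exp_neg_sq hV.ne' x t)
        refine (hd.congr_deriv ?_).congr_of_eventuallyEq
          (Eventually.of_forall fun s => by simp)
        simp
        ring)
  refine h.congr_deriv ?_
  have i0 := integrable_gaussMoment hq hV hV' hint (k := 0) (by norm_num)
  have i2 := integrable_gaussMoment hq hV hV' hint (k := 2) (by norm_num)
  rw [gaussMoment, gaussMoment, ← integral_div, ← integral_sub (i2.div_const V) i0]
  simp only [mul_div_assoc, mul_sub]

theorem hasDerivAt_gaussMoment_zero_var (hq : Measurable q) (hV : 0 < V) (hV' : V < V')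
    (hint : Integrable (fun x => q x * ((1 + x ^ 2) * Real.exp (-(x - r) ^ 2 / (2 * V')))) ν) :
    HasDerivAt (fun v => gaussMoment ν q 0 r v) (gaussMoment ν q 2 r V / (2 * V ^ 2)) V := by
  have h := hasDerivAt_integral_mul_of_le (ν := ν) (t₀ := V)
    (K := (4 * r ^ 2 + 7) * (1 + 2 / V ^ 2))
    (G := fun v x => (x - r) ^ 0 * Real.exp (-(x - r) ^ 2 / (2 * v)))
    (G' := fun v x => ((x - r) ^ 2 * Real.exp (-(x - r) ^ 2 / (2 * v))) / (2 * v ^ 2))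
    hq hint (fun t => by fun_prop) (by fun_prop) (by
      filter_upwards [Ioo_mem_nhds (half_lt_self hV) hV'] with v hv x
      obtain ⟨hv1, hv2⟩ := hv
      have hv0 : 0 < v := (half_pos hV).trans hv1
      have hE : Real.exp (-(x - r) ^ 2 / (2 * v)) ≤ Real.exp (-(x - r) ^ 2 / (2 * V')) := by
        rw [Real.exp_le_exp, neg_div, neg_div, neg_le_neg_iff]
        gcongr
      have hk : ∀ k ≤ 2, |(x - r) ^ k * Real.exp (-(x - r) ^ 2 / (2 * v))| ≤
          (4 * r ^ 2 + 7) * ((1 + x ^ 2) * Real.exp (-(x - r) ^ 2 / (2 * V'))) := by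
        intro k hk
        rw [abs_mul, abs_of_pos (Real.exp_pos _), ← mul_assoc]
        exact mul_le_mul (abs_pow_sub_le_of_abs_sub_le_one (by simp) x hk) hE
          (Real.exp_pos _).le (by positivity)
      set W := (1 + x ^ 2) * Real.exp (-(x - r) ^ 2 / (2 * V'))
      have hW : 0 ≤ W := by positivity
      have e : (4 * r ^ 2 + 7) * (1 + 2 / V ^ 2) * W =
        (4 * r ^ 2 + 7) * W + (4 * r ^ 2 + 7) * W * (2 / V ^ 2) := by ring
      have p0 : 0 ≤ (4 * r ^ 2 + 7) * W * (2 / V ^ 2) := by positivity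
      have p1 : 0 ≤ (4 * r ^ 2 + 7) * W := by positivity
      refine ⟨by rw [e]; linarith [hk 0 (by norm_num)], ?_, ?_⟩
      · have hi : 1 / (2 * v ^ 2) ≤ 2 / V ^ 2 := by
          rw [div_le_div_iff₀ (by positivity) (by positivity)]
          nlinarith
        rw [abs_div, abs_of_pos (by positivity : 0 < 2 * v ^ 2), e, div_eq_mul_one_div]
        have := mul_le_mul (hk 2 le_rfl) hi (by positivity) p1
        linarith
      · have hd := (((hasDerivAt_id v).const_mul 2).inv (by simpa using hv0.ne')).const_mul
          (-(x - r) ^ 2) |>.exp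
        refine (hd.congr_deriv ?_).congr_of_eventuallyEq
          (Eventually.of_forall fun s => by simp [div_eq_mul_inv])
        simp [div_eq_mul_inv]
        field_simp)
  refine h.congr_deriv ?_
  rw [gaussMoment, ← integral_div]
  simp only [mul_div_assoc]

end GaussianMoments

section OutputChannel

variable {p : ℝ → ℝ} {ω V V' : ℝ}

theorem Zout_eq_gaussMoment (p : ℝ → ℝ) (ω V : ℝ) : Zout p ω V = gaussMoment volume p 0 ω V := by
  simp [Zout, gaussMoment]

theorem gout_eq_gaussMoment (p : ℝ → ℝ) (ω V : ℝ) :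
    gout p ω V = gaussMoment volume p 1 ω V / (V * gaussMoment volume p 0 ω V) := by
  simp [gout, Zout_eq_gaussMoment, gaussMoment, mul_assoc]

theorem hasDerivAt_gout (hp : Measurable p) (hV : 0 < V) (hV' : V < V')
    (hint : Integrable (fun z => p z * ((1 + z ^ 2) * Real.exp (-(z - ω) ^ 2 / (2 * V')))))
    (hZ : 0 < Zout p ω V) :
    HasDerivAt (fun t => gout p t V)
      (gaussMoment volume p 2 ω V / (V ^ 2 * gaussMoment volume p 0 ω V) - 1 / V
        - gout p ω V ^ 2) ω := by
  rw [Zout_eq_gaussMoment] at hZ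
  simp only [gout_eq_gaussMoment]
  refine ((hasDerivAt_gaussMoment_one hp hV hV' hint).div
    ((hasDerivAt_gaussMoment_zero hp hV hV' hint).const_mul V) (by positivity)).congr_deriv ?_
  field_simp

theorem hasDerivAt_log_Zmu (hp : Measurable p) (hV : 0 < V) (hV' : V < V')
    (hint : Integrable (fun z => p z * ((1 + z ^ 2) * Real.exp (-(z - ω) ^ 2 / (2 * V')))))
    (hZ : 0 < Zout p ω V) :
    HasDerivAt (fun t => Real.log (Zmu p t V)) (gout p ω V) ω := by
  rw [Zout_eq_gaussMoment] at hZ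
  have hs : 0 < Real.sqrt (2 * Real.pi * V) := by positivity
  simp only [Zmu, Zout_eq_gaussMoment, gout_eq_gaussMoment]
  refine (((hasDerivAt_gaussMoment_zero hp hV hV' hint).const_mul _).log
    (by positivity)).congr_deriv ?_
  field_simp

theorem hasDerivAt_log_Zmu_var (hp : Measurable p) (hV : 0 < V) (hV' : V < V')
    (hint : Integrable (fun z => p z * ((1 + z ^ 2) * Real.exp (-(z - ω) ^ 2 / (2 * V')))))
    (hZ : 0 < Zout p ω V) :
    HasDerivAt (fun v => Real.log (Zmu p ω v))
      ((deriv (fun t => gout p t V) ω + gout p ω V ^ 2) / 2) V := by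
  rw [(hasDerivAt_gout hp hV hV' hint hZ).deriv]
  rw [Zout_eq_gaussMoment] at hZ
  have hs : 0 < Real.sqrt (2 * Real.pi * V) := by positivity
  have hs2 : Real.sqrt (2 * Real.pi * V) ^ 2 = 2 * Real.pi * V := Real.sq_sqrt (by positivity)
  simp only [Zmu, Zout_eq_gaussMoment]
  have hd := (((hasDerivAt_id V).const_mul (2 * Real.pi)).sqrt
    (by simpa using hV.ne')).inv hs.ne'
  refine ((hd.mul (hasDerivAt_gaussMoment_zero_var hp hV hV' hint)).log
    (by simpa using ⟨hs.ne', hZ.ne'⟩)).congr_deriv ?_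
  simp only [id, Pi.mul_apply, Pi.inv_apply, hs2, mul_one]
  field_simp
  ring

end OutputChannel

section Prior

variable {ρ R σ : ℝ}

theorem isProbabilityMeasure_P0 (hρ : ρ ∈ Set.Icc (0 : ℝ) 1) : IsProbabilityMeasure (P0 ρ) :=
  ⟨by simp [P0, ← ENNReal.ofReal_add hρ.1 (sub_nonneg.2 hρ.2)]⟩

theorem Zpart_eq_gaussMoment (ρ R σ : ℝ) :
    Zpart ρ R σ = gaussMoment (P0 ρ) 1 0 R (σ ^ 2) := by
  simp [Zpart, gaussMoment]

theorem integrable_one_add_sq_mul_exp (ν : Measure ℝ) [IsFiniteMeasure ν] (R : ℝ) {V : ℝ}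
    (hV : 0 < V) :
    Integrable (fun x => (1 : ℝ → ℝ) x *
      ((1 + x ^ 2) * Real.exp (-(x - R) ^ 2 / (2 * V)))) ν := by
  refine Integrable.of_bound (by simp; fun_prop) (1 + 2 * R ^ 2 + 4 * V)
    (Eventually.of_forall fun x => ?_)
  have hu : 0 ≤ (x - R) ^ 2 / (2 * V) := by positivity
  set u := (x - R) ^ 2 / (2 * V) with hu'
  have hx : (x - R) ^ 2 = 2 * V * u := by rw [hu']; field_simp
  have h1 : Real.exp (-u) ≤ 1 := by simpa using hu
  have h2 : u * Real.exp (-u) ≤ 1 := by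
    rw [Real.exp_neg, ← div_eq_mul_inv, div_le_one (Real.exp_pos _)]
    linarith [Real.add_one_le_exp u]
  have h3 : 1 + x ^ 2 ≤ (1 + 2 * R ^ 2) + 4 * V * u := by nlinarith [sq_nonneg (x - 2 * R)]
  rw [neg_div, ← hu', Pi.one_apply, one_mul, Real.norm_of_nonneg (by positivity)]
  calc _ ≤ ((1 + 2 * R ^ 2) + 4 * V * u) * Real.exp (-u) := by gcongr
    _ = (1 + 2 * R ^ 2) * Real.exp (-u) + 4 * V * (u * Real.exp (-u)) := by ring
    _ ≤ (1 + 2 * R ^ 2) * 1 + 4 * V * 1 := by gcongr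
    _ = _ := by ring

theorem integrable_gaussMoment_P0 (hρ : ρ ∈ Set.Icc (0 : ℝ) 1) (hσ : 0 < σ) {k : ℕ}
    (hk : k ≤ 2) :
    Integrable (fun x => (1 : ℝ → ℝ) x *
      ((x - R) ^ k * Real.exp (-(x - R) ^ 2 / (2 * σ ^ 2)))) (P0 ρ) := by
  have := isProbabilityMeasure_P0 hρ
  exact integrable_gaussMoment measurable_one (by positivity) (lt_add_one (σ ^ 2))
    (integrable_one_add_sq_mul_exp (P0 ρ) R (by positivity)) hk

theorem gaussMoment_P0_pos (hρ : ρ ∈ Set.Icc (0 : ℝ) 1) (hσ : 0 < σ) :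
    0 < gaussMoment (P0 ρ) 1 0 R (σ ^ 2) := by
  have := isProbabilityMeasure_P0 hρ
  have h := integrable_gaussMoment_P0 (R := R) hρ hσ (k := 0) (by norm_num)
  simp only [Pi.one_apply, one_mul, pow_zero] at h
  simpa [gaussMoment] using integral_exp_pos h

theorem fa_eq_gaussMoment (hρ : ρ ∈ Set.Icc (0 : ℝ) 1) (hσ : 0 < σ) :
    fa ρ R σ =
      R + gaussMoment (P0 ρ) 1 1 R (σ ^ 2) / gaussMoment (P0 ρ) 1 0 R (σ ^ 2) := by
  have h0 := integrable_gaussMoment_P0 (R := R) hρ hσ (k := 0) (by norm_num)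
  have h1 := integrable_gaussMoment_P0 (R := R) hρ hσ (k := 1) (by norm_num)
  have e : ∫ x, x * Real.exp (-(x - R) ^ 2 / (2 * σ ^ 2)) ∂(P0 ρ) =
      gaussMoment (P0 ρ) 1 1 R (σ ^ 2) + R * gaussMoment (P0 ρ) 1 0 R (σ ^ 2) := by
    rw [gaussMoment, gaussMoment, ← integral_const_mul, ← integral_add h1 (h0.const_mul R)]
    congr 1 with x
    simp
    ring
  have hpos := gaussMoment_P0_pos (R := R) hρ hσ
  rw [fa, Zpart_eq_gaussMoment, e]
  field_simp
  ring

theorem fc_eq_gaussMoment (hρ : ρ ∈ Set.Icc (0 : ℝ) 1) (hσ : 0 < σ) :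
    fc ρ R σ = gaussMoment (P0 ρ) 1 2 R (σ ^ 2) / gaussMoment (P0 ρ) 1 0 R (σ ^ 2) -
      (fa ρ R σ - R) ^ 2 := by
  have h0 := integrable_gaussMoment_P0 (R := R) hρ hσ (k := 0) (by norm_num)
  have h1 := integrable_gaussMoment_P0 (R := R) hρ hσ (k := 1) (by norm_num)
  have h2 := integrable_gaussMoment_P0 (R := R) hρ hσ (k := 2) (by norm_num)
  have e : ∫ x, x ^ 2 * Real.exp (-(x - R) ^ 2 / (2 * σ ^ 2)) ∂(P0 ρ) =
      gaussMoment (P0 ρ) 1 2 R (σ ^ 2) + (2 * R * gaussMoment (P0 ρ) 1 1 R (σ ^ 2)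
        + R ^ 2 * gaussMoment (P0 ρ) 1 0 R (σ ^ 2)) := by
    rw [gaussMoment, gaussMoment, gaussMoment, ← integral_const_mul, ← integral_const_mul,
      ← integral_add (h1.const_mul _) (h0.const_mul _),
      ← integral_add h2 ((h1.const_mul _).fun_add (h0.const_mul _))]
    congr 1 with x
    simp
    ring
  have hpos := gaussMoment_P0_pos (R := R) hρ hσ
  rw [fc, Zpart_eq_gaussMoment, e, fa_eq_gaussMoment hρ hσ]
  field_simp
  ring

theorem hasDerivAt_log_Zpart (hρ : ρ ∈ Set.Icc (0 : ℝ) 1) (hσ : 0 < σ) :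
    HasDerivAt (fun t => Real.log (Zpart ρ t σ)) ((fa ρ R σ - R) / σ ^ 2) R := by
  have := isProbabilityMeasure_P0 hρ
  have hpos := gaussMoment_P0_pos (R := R) hρ hσ
  have hd := hasDerivAt_gaussMoment_zero measurable_one (by positivity) (lt_add_one (σ ^ 2))
    (integrable_one_add_sq_mul_exp (P0 ρ) R (by positivity))
  simp only [Zpart_eq_gaussMoment]
  refine (hd.log hpos.ne').congr_deriv ?_
  rw [fa_eq_gaussMoment hρ hσ]
  field_simp
  ring

theorem hasDerivAt_log_Zpart_scale (hρ : ρ ∈ Set.Icc (0 : ℝ) 1) (hσ : 0 < σ) :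
    HasDerivAt (fun s => Real.log (Zpart ρ R s))
      ((fc ρ R σ + (fa ρ R σ - R) ^ 2) / σ ^ 3) σ := by
  have := isProbabilityMeasure_P0 hρ
  have hpos := gaussMoment_P0_pos (R := R) hρ hσ
  have hd := hasDerivAt_gaussMoment_zero_var measurable_one (by positivity) (lt_add_one (σ ^ 2))
    (integrable_one_add_sq_mul_exp (P0 ρ) R (by positivity))
  simp only [Zpart_eq_gaussMoment]
  refine ((HasDerivAt.comp (h := fun s => s ^ 2) σ hd (hasDerivAt_pow 2 σ)).log hpos.ne').congr_deriv ?_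
  rw [fc_eq_gaussMoment hρ hσ]
  simp
  field_simp

end Prior

theorem HasDerivAt.zero_iff {f : ℝ → ℝ} {d x : ℝ} (h : HasDerivAt f d x) :
    HasDerivAt f 0 x ↔ d = 0 :=
  ⟨fun h0 => h.unique h0, fun e => e ▸ h⟩

theorem hasDerivAt_sum_update {ι : Type*} [Fintype ι] [DecidableEq ι] {h : ι → ℝ → ℝ}
    {x : ι → ℝ} {i : ι} {d : ℝ} (hd : HasDerivAt (h i) d (x i)) :
    HasDerivAt (fun t => ∑ j, h j (Function.update x i t j)) d (x i) := by
  have key : HasDerivAt (fun t => ∑ j, h j (Function.update x i t j))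
      (∑ j, if j = i then d else 0) (x i) := by
    refine HasDerivAt.fun_sum fun j _ => ?_
    by_cases hj : j = i
    · subst hj
      simpa using hd
    · simpa [hj] using hasDerivAt_const (x i) (h j (x j))
  simpa using key

section FreeEnergy

variable {ρ : ℝ} {M N : ℕ} {F : Fin M → Fin N → ℝ} {p : Fin M → ℝ → ℝ}
  {R Sv a c : Fin N → ℝ} {ω : Fin M → ℝ}

theorem hasDerivAt_FGAMP_R (hρ : ρ ∈ Set.Icc (0 : ℝ) 1) (hS : ∀ i, 0 < Sv i) (i : Fin N) :
    HasDerivAt (fun t => FGAMP ρ F p (Function.update R i t) Sv ω a c)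
      ((a i - fa ρ (R i) (Sv i)) / Sv i ^ 2) (R i) := by
  have hSi := hS i
  have h1 : HasDerivAt (fun x => (c i + (a i - x) ^ 2) / (2 * Sv i ^ 2))
      (-(a i - R i) / Sv i ^ 2) (R i) := by
    refine (((((hasDerivAt_id (R i)).const_sub (a i)).pow 2).const_add (c i)).div_const
      (2 * Sv i ^ 2)).congr_deriv ?_
    simp
    field_simp
    ring
  have h2 := hasDerivAt_sum_update
    (h := fun j x => (c j + (a j - x) ^ 2) / (2 * Sv j ^ 2)) h1
  have h3 := hasDerivAt_sum_update (h := fun j x => Real.log (Zpart ρ x (Sv j)))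
    (hasDerivAt_log_Zpart (R := R i) hρ hSi)
  refine (((h2.const_sub _).sub_const _).sub h3).congr_deriv ?_
  ring

theorem hasDerivAt_FGAMP_Sv (hρ : ρ ∈ Set.Icc (0 : ℝ) 1) (hS : ∀ i, 0 < Sv i) (i : Fin N) :
    HasDerivAt (fun t => FGAMP ρ F p R (Function.update Sv i t) ω a c)
      (((c i + (a i - R i) ^ 2) - (fc ρ (R i) (Sv i) + (fa ρ (R i) (Sv i) - R i) ^ 2))
        / Sv i ^ 3) (Sv i) := by
  have hSi := hS i
  have h1 : HasDerivAt (fun x => (c i + (a i - R i) ^ 2) / (2 * x ^ 2))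
      (-(c i + (a i - R i) ^ 2) / Sv i ^ 3) (Sv i) := by
    refine ((hasDerivAt_const (Sv i) (c i + (a i - R i) ^ 2)).div
      ((hasDerivAt_pow 2 (Sv i)).const_mul 2) (by positivity)).congr_deriv ?_
    simp
    field_simp
    ring
  have h2 := hasDerivAt_sum_update
    (h := fun j x => (c j + (a j - R j) ^ 2) / (2 * x ^ 2)) h1
  have h3 := hasDerivAt_sum_update (h := fun j x => Real.log (Zpart ρ (R j) x))
    (hasDerivAt_log_Zpart_scale (R := R i) hρ hSi)
  refine (((h2.const_sub _).sub_const _).sub h3).congr_deriv ?_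
  ring

theorem hasDerivAt_FGAMP_omega (hp : ∀ μ, Measurable (p μ))
    (hVpos : ∀ μ, 0 < ∑ i, F μ i ^ 2 * c i)
    (hdom : ∀ μ, ∃ V' > ∑ i, F μ i ^ 2 * c i,
      Integrable (fun z => p μ z * ((1 + z ^ 2) * Real.exp (-(z - ω μ) ^ 2 / (2 * V')))))
    (hZ : ∀ μ, 0 < Zout (p μ) (ω μ) (∑ i, F μ i ^ 2 * c i)) (μ : Fin M) :
    HasDerivAt (fun t => FGAMP ρ F p R Sv (Function.update ω μ t) a c)
      (-gout (p μ) (ω μ) (∑ i, F μ i ^ 2 * c i)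
        - (ω μ - ∑ i, F μ i * a i) / (∑ i, F μ i ^ 2 * c i)) (ω μ) := by
  obtain ⟨V', hV', hint⟩ := hdom μ
  have hV := hVpos μ
  have h1 := hasDerivAt_sum_update
    (h := fun ν x => Real.log (Zmu (p ν) x (∑ i, F ν i ^ 2 * c i)))
    (hasDerivAt_log_Zmu (hp μ) hV hV' hint (hZ μ))
  have h2 : HasDerivAt (fun x => (x - ∑ i, F μ i * a i) ^ 2 / (2 * ∑ i, F μ i ^ 2 * c i))
      ((ω μ - ∑ i, F μ i * a i) / ∑ i, F μ i ^ 2 * c i) (ω μ) := by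
    refine ((((hasDerivAt_id (ω μ)).sub_const (∑ i, F μ i * a i)).pow 2).div_const
      (2 * ∑ i, F μ i ^ 2 * c i)).congr_deriv ?_
    simp
    field_simp
  have h3 := hasDerivAt_sum_update
    (h := fun ν x => (x - ∑ i, F ν i * a i) ^ 2 / (2 * ∑ i, F ν i ^ 2 * c i)) h2
  exact ((h1.neg.sub_const _).sub h3).sub_const _

theorem hasDerivAt_FGAMP_a (hS : ∀ i, 0 < Sv i) (hVpos : ∀ μ, 0 < ∑ i, F μ i ^ 2 * c i)
    (i : Fin N) :
    HasDerivAt (fun t => FGAMP ρ F p R Sv ω (Function.update a i t) c)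
      (-(a i - R i) / Sv i ^ 2
        + ∑ μ, F μ i * ((ω μ - ∑ j, F μ j * a j) / ∑ j, F μ j ^ 2 * c j)) (a i) := by
  have hSi := hS i
  have h1 : HasDerivAt (fun x => (c i + (x - R i) ^ 2) / (2 * Sv i ^ 2))
      ((a i - R i) / Sv i ^ 2) (a i) := by
    refine (((((hasDerivAt_id (a i)).sub_const (R i)).pow 2).const_add (c i)).div_const
      (2 * Sv i ^ 2)).congr_deriv ?_
    simp
    field_simp
  have h2 := hasDerivAt_sum_update
    (h := fun j x => (c j + (x - R j) ^ 2) / (2 * Sv j ^ 2)) h1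
  have h3 : HasDerivAt (fun t => ∑ μ, (ω μ - ∑ j, F μ j * Function.update a i t j) ^ 2 /
      (2 * ∑ j, F μ j ^ 2 * c j))
      (∑ μ, -(F μ i * ((ω μ - ∑ j, F μ j * a j) / ∑ j, F μ j ^ 2 * c j))) (a i) := by
    refine HasDerivAt.fun_sum fun μ _ => ?_
    have hV := hVpos μ
    have hl := hasDerivAt_sum_update (x := a) (i := i) (h := fun j x => F μ j * x)
      ((hasDerivAt_id (a i)).const_mul (F μ i))
    refine (((hl.const_sub (ω μ)).pow 2).div_const _).congr_deriv ?_
    simp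
    field_simp
  refine (((h2.const_sub _).sub h3).sub_const _).congr_deriv ?_
  rw [Finset.sum_neg_distrib]
  ring

theorem hasDerivAt_FGAMP_c (hp : ∀ μ, Measurable (p μ))
    (hVpos : ∀ μ, 0 < ∑ i, F μ i ^ 2 * c i)
    (hdom : ∀ μ, ∃ V' > ∑ i, F μ i ^ 2 * c i,
      Integrable (fun z => p μ z * ((1 + z ^ 2) * Real.exp (-(z - ω μ) ^ 2 / (2 * V')))))
    (hZ : ∀ μ, 0 < Zout (p μ) (ω μ) (∑ i, F μ i ^ 2 * c i)) (i : Fin N) :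
    HasDerivAt (fun t => FGAMP ρ F p R Sv ω a (Function.update c i t))
      (-∑ μ, F μ i ^ 2 * ((deriv (fun t => gout (p μ) t (∑ j, F μ j ^ 2 * c j)) (ω μ)
          + gout (p μ) (ω μ) (∑ j, F μ j ^ 2 * c j) ^ 2) / 2)
        - 1 / (2 * Sv i ^ 2)
        + ∑ μ, F μ i ^ 2 *
          (((ω μ - ∑ j, F μ j * a j) / ∑ j, F μ j ^ 2 * c j) ^ 2 / 2)) (c i) := by
  have hl : ∀ μ, HasDerivAt (fun t => ∑ j, F μ j ^ 2 * Function.update c i t j)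
      (F μ i ^ 2) (c i) := fun μ => by
    simpa using hasDerivAt_sum_update (x := c) (i := i) (h := fun j x => F μ j ^ 2 * x)
      ((hasDerivAt_id (c i)).const_mul (F μ i ^ 2))
  have h1 : HasDerivAt (fun t => ∑ μ, Real.log (Zmu (p μ) (ω μ)
      (∑ j, F μ j ^ 2 * Function.update c i t j)))
      (∑ μ, F μ i ^ 2 * ((deriv (fun t => gout (p μ) t (∑ j, F μ j ^ 2 * c j)) (ω μ)
          + gout (p μ) (ω μ) (∑ j, F μ j ^ 2 * c j) ^ 2) / 2)) (c i) := by
    refine HasDerivAt.fun_sum fun μ _ => ?_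
    obtain ⟨V', hV', hint⟩ := hdom μ
    refine (HasDerivAt.comp_of_eq (c i)
      (hasDerivAt_log_Zmu_var (hp μ) (hVpos μ) hV' hint (hZ μ)) (hl μ) (by simp)).congr_deriv ?_
    ring
  have h2 := hasDerivAt_sum_update
    (h := fun j x => (x + (a j - R j) ^ 2) / (2 * Sv j ^ 2))
    (((hasDerivAt_id (c i)).add_const ((a i - R i) ^ 2)).div_const (2 * Sv i ^ 2))
  have h3 : HasDerivAt (fun t => ∑ μ, (ω μ - ∑ j, F μ j * a j) ^ 2 /
      (2 * ∑ j, F μ j ^ 2 * Function.update c i t j))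
      (∑ μ, -(F μ i ^ 2 *
          (((ω μ - ∑ j, F μ j * a j) / ∑ j, F μ j ^ 2 * c j) ^ 2 / 2))) (c i) := by
    refine HasDerivAt.fun_sum fun μ _ => ?_
    have hV := hVpos μ
    refine ((hasDerivAt_const (c i) ((ω μ - ∑ j, F μ j * a j) ^ 2)).div
      ((hl μ).const_mul 2) (by simpa using hV.ne')).congr_deriv ?_
    simp
    field_simp
  refine (((h1.neg.sub h2).sub h3).sub_const _).congr_deriv ?_
  rw [Finset.sum_neg_distrib]
  ring

end FreeEnergy

/-- Bethe/GAMP correspondence: under the stated positivity and domination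
hypotheses, all partial derivatives of the GAMP Bethe free energy with respect to each
`R_i`, `Σ_i`, `ω_μ`, `a_i` and `c_i` vanish at `(R,Σ,ω,a,c)` iff the GAMP fixed-point
equations (i)–(v) hold. -/
theorem stmt17 (ρ : ℝ) (hρ : ρ ∈ Set.Icc (0 : ℝ) 1) {M N : ℕ}
    (F : Fin M → Fin N → ℝ) (p : Fin M → ℝ → ℝ)
    (hp : ∀ μ, Measurable (p μ)) (hp0 : ∀ μ z, 0 ≤ p μ z)
    (R Sv a c : Fin N → ℝ) (ω : Fin M → ℝ)
    (hS : ∀ i, 0 < Sv i) (hc0 : ∀ i, 0 ≤ c i)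
    (hVpos : ∀ μ, 0 < ∑ i, F μ i ^ 2 * c i)
    (hdom : ∀ μ, ∃ V' > ∑ i, F μ i ^ 2 * c i,
      Integrable (fun z => (1 + z ^ 2) * p μ z * Real.exp (-(z - ω μ) ^ 2 / (2 * V'))))
    (hZ : ∀ μ, 0 < Zout (p μ) (ω μ) (∑ i, F μ i ^ 2 * c i)) :
    ((∀ i, HasDerivAt (fun t => FGAMP ρ F p (Function.update R i t) Sv ω a c) 0 (R i)) ∧
     (∀ i, HasDerivAt (fun t => FGAMP ρ F p R (Function.update Sv i t) ω a c) 0 (Sv i)) ∧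
     (∀ μ, HasDerivAt (fun t => FGAMP ρ F p R Sv (Function.update ω μ t) a c) 0 (ω μ)) ∧
     (∀ i, HasDerivAt (fun t => FGAMP ρ F p R Sv ω (Function.update a i t) c) 0 (a i)) ∧
     (∀ i, HasDerivAt (fun t => FGAMP ρ F p R Sv ω a (Function.update c i t)) 0 (c i)))
    ↔ ((∀ i, a i = fa ρ (R i) (Sv i)) ∧
       (∀ i, c i = fc ρ (R i) (Sv i)) ∧
       (∀ μ, ω μ = ∑ i, F μ i * a i
          - (∑ i, F μ i ^ 2 * c i) * gout (p μ) (ω μ) (∑ i, F μ i ^ 2 * c i)) ∧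
       (∀ i, R i = a i
          + Sv i ^ 2 * ∑ μ, F μ i * gout (p μ) (ω μ) (∑ j, F μ j ^ 2 * c j)) ∧
       (∀ i, 1 / Sv i ^ 2 = ∑ μ, F μ i ^ 2 *
          (-deriv (fun ω' => gout (p μ) ω' (∑ j, F μ j ^ 2 * c j)) (ω μ)))) := by
  have hdom' : ∀ μ, ∃ V' > ∑ i, F μ i ^ 2 * c i, Integrable (fun z =>
      p μ z * ((1 + z ^ 2) * Real.exp (-(z - ω μ) ^ 2 / (2 * V')))) := fun μ => by
    obtain ⟨V', hV', hint⟩ := hdom μ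
    exact ⟨V', hV', hint.congr (Eventually.of_forall fun z => by ring)⟩
  simp only [fun i => (hasDerivAt_FGAMP_R (F := F) (p := p) (R := R) (a := a) (c := c) (ω := ω)
      hρ hS i).zero_iff,
    fun i => (hasDerivAt_FGAMP_Sv (F := F) (p := p) (R := R) (a := a) (c := c) (ω := ω)
      hρ hS i).zero_iff,
    fun μ => (hasDerivAt_FGAMP_omega (ρ := ρ) (R := R) (Sv := Sv) (a := a)
      hp hVpos hdom' hZ μ).zero_iff,
    fun i => (hasDerivAt_FGAMP_a (ρ := ρ) (p := p) (R := R) (a := a) (ω := ω)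
      hS hVpos i).zero_iff,
    fun i => (hasDerivAt_FGAMP_c (ρ := ρ) (R := R) (Sv := Sv) (a := a)
      hp hVpos hdom' hZ i).zero_iff]
  have hRa : ∀ i, (a i - fa ρ (R i) (Sv i)) / Sv i ^ 2 = 0 ↔ a i = fa ρ (R i) (Sv i) :=
    fun i => by rw [div_eq_zero_iff, or_iff_left (pow_ne_zero 2 (hS i).ne'), sub_eq_zero]
  simp only [hRa]
  refine and_congr_right fun ha => and_congr (forall_congr' fun i => ?_) ?_
  · rw [div_eq_zero_iff, or_iff_left (pow_ne_zero 3 (hS i).ne'), ← ha i,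
      add_sub_add_right_eq_sub, sub_eq_zero]
  have hω : ∀ μ, -gout (p μ) (ω μ) (∑ i, F μ i ^ 2 * c i)
        - (ω μ - ∑ i, F μ i * a i) / (∑ i, F μ i ^ 2 * c i) = 0 ↔
      ω μ = ∑ i, F μ i * a i
        - (∑ i, F μ i ^ 2 * c i) * gout (p μ) (ω μ) (∑ i, F μ i ^ 2 * c i) := fun μ => by
    have hV := (hVpos μ).ne'
    rw [sub_eq_zero, eq_div_iff hV]
    constructor <;> intro h <;> linarith
  refine (and_congr_left' (forall_congr' hω)).trans (and_congr_right fun h => ?_)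
  have hg : ∀ μ, (ω μ - ∑ i, F μ i * a i) / (∑ i, F μ i ^ 2 * c i) =
      -gout (p μ) (ω μ) (∑ i, F μ i ^ 2 * c i) := fun μ => by
    linarith [(hω μ).2 (h μ)]
  simp only [hg]
  refine and_congr (forall_congr' fun i => ?_) (forall_congr' fun i => ?_)
  · have hSi := pow_ne_zero 2 (hS i).ne'
    simp only [mul_neg, Finset.sum_neg_distrib]
    rw [← sub_eq_add_neg, sub_eq_zero, div_eq_iff hSi]
    constructor <;> intro h <;> linarith
  · have e : ∀ A B S : ℝ, -A - 1 / (2 * S) + B = (2 * (B - A) - 1 / S) / 2 := fun A B S => by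
      ring
    rw [e, ← Finset.sum_sub_distrib, Finset.mul_sum, div_eq_zero_iff,
      or_iff_left two_ne_zero, sub_eq_zero, eq_comm]
    refine Eq.congr_right (Finset.sum_congr rfl fun μ _ => ?_)
    ring
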